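/- There exists a constant c > 0 (depending only on ξ and the sequence (x_k)) such that every nonzero polynomial R ∈ ℤ[T] of degree at most 3 satisfies |R(ξ)| ≥ c·‖R‖^(−γ³). Moreover, if R is not divisible within ℚ[T] by any of the polynomials Q_k (k ≥ 1), then the stronger estimate |R(ξ)| ≥ c·‖R‖^(−1−γ²) holds. -/

import Mathlib

open Polynomial Filter

noncomputable def gold : ℝ := (1 + Real.sqrt 5) / 2

def Mmat (k : ℕ) : Matrix (Fin 2) (Fin 2) ℤ := !![3, (-1)^k; (-1)^(k+1), 0]

noncomputable def Xnorm (x : ℕ → Matrix (Fin 2) (Fin 2) ℤ) (k : ℕ) : ℝ :=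
  max |(x k 0 0 : ℝ)| (max |(x k 0 1 : ℝ)| |(x k 1 1 : ℝ)|)

def MarkoffSeq (ξ : ℝ) (x : ℕ → Matrix (Fin 2) (Fin 2) ℤ) : Prop :=
  (∀ k, 1 ≤ k → x k 0 1 = x k 1 0) ∧
  (∀ k, 1 ≤ k → (x k).det = 1) ∧
  ∃ c₁ c₂ c₃ : ℝ, 0 < c₁ ∧ 0 < c₂ ∧ 0 < c₃ ∧ ∀ k, 1 ≤ k →
    (c₁ * Xnorm x k ^ gold ≤ Xnorm x (k+1) ∧ Xnorm x (k+1) ≤ c₂ * Xnorm x k ^ gold) ∧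
    (|(x k 0 0 : ℝ) * ξ - (x k 0 1 : ℝ)| ≤ c₃ / Xnorm x k ∧
     |(x k 0 1 : ℝ) * ξ - (x k 1 1 : ℝ)| ≤ c₃ / Xnorm x k) ∧
    (x (k+2) = x (k+1) * Mmat (k+1) * x k ∧ x (k+2) = x k * Mmat k * x (k+1)) ∧
    (Xnorm x k < Xnorm x (k+1) ∧ Xnorm x k < (1 + ξ^2) * |(x k 0 0 : ℝ)|)

def polyNorm (P : Polynomial ℤ) : ℕ := P.support.sup fun i => (P.coeff i).natAbs

noncomputable def distInt (η : ℝ) : ℝ := |η - round η|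

noncomputable def ratHeight (α : ℚ) : ℝ := max |(α.num : ℝ)| (α.den : ℝ)

def IsMinIntPoly (α : ℂ) (P : Polynomial ℤ) : Prop :=
  P ≠ 0 ∧ Polynomial.aeval α P = 0 ∧ P.content = 1 ∧ 0 < P.leadingCoeff ∧
  ∀ Q : Polynomial ℤ, Q ≠ 0 → Polynomial.aeval α Q = 0 → P.degree ≤ Q.degree

noncomputable def Qpoly (x : ℕ → Matrix (Fin 2) (Fin 2) ℤ) (k : ℕ) : Polynomial ℤ :=
  Polynomial.C (x k 0 1 * x (k+1) 1 1 - x k 1 1 * x (k+1) 0 1)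
  - Polynomial.C (x k 0 0 * x (k+1) 1 1 - x k 1 1 * x (k+1) 0 0) * Polynomial.X
  + Polynomial.C (x k 0 0 * x (k+1) 0 1 - x k 0 1 * x (k+1) 0 0) * Polynomial.X ^ 2

/-- The determinant of a `3 × 3` matrix, given by its rows. -/
def det3 {S : Type*} [CommRing S] (a₁ a₂ a₃ b₁ b₂ b₃ c₁ c₂ c₃ : S) : S :=
  a₁ * (b₂ * c₃ - b₃ * c₂) - a₂ * (b₁ * c₃ - b₃ * c₁) + a₃ * (b₁ * c₂ - b₂ * c₁)

/-- The determinant of a `4 × 4` matrix, given by its rows, expanded along the first column. -/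
def det4 {S : Type*} [CommRing S] (a₀ a₁ a₂ a₃ b₀ b₁ b₂ b₃ c₀ c₁ c₂ c₃ d₀ d₁ d₂ d₃ : S) : S :=
  a₀ * det3 b₁ b₂ b₃ c₁ c₂ c₃ d₁ d₂ d₃ - b₀ * det3 a₁ a₂ a₃ c₁ c₂ c₃ d₁ d₂ d₃
    + c₀ * det3 a₁ a₂ a₃ b₁ b₂ b₃ d₁ d₂ d₃ - d₀ * det3 a₁ a₂ a₃ b₁ b₂ b₃ c₁ c₂ c₃

theorem abs_det3_le {a₁ a₂ a₃ b₁ b₂ b₃ c₁ c₂ c₃ p q r : ℝ}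
    (ha₁ : |a₁| ≤ p) (ha₂ : |a₂| ≤ p) (ha₃ : |a₃| ≤ p)
    (hb₁ : |b₁| ≤ q) (hb₂ : |b₂| ≤ q) (hb₃ : |b₃| ≤ q)
    (hc₁ : |c₁| ≤ r) (hc₂ : |c₂| ≤ r) (hc₃ : |c₃| ≤ r) :
    |det3 a₁ a₂ a₃ b₁ b₂ b₃ c₁ c₂ c₃| ≤ 6 * (p * q * r) := by
  have hp : 0 ≤ p := (abs_nonneg _).trans ha₁
  have hq : 0 ≤ q := (abs_nonneg _).trans hb₁
  have hmul : ∀ {u v w : ℝ}, |u| ≤ p → |v| ≤ q → |w| ≤ r → |u * v * w| ≤ p * q * r := by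
    intro u v w hu hv hw
    rw [abs_mul, abs_mul]
    gcongr
  have h₁ := abs_le.mp (hmul ha₁ hb₂ hc₃)
  have h₂ := abs_le.mp (hmul ha₁ hb₃ hc₂)
  have h₃ := abs_le.mp (hmul ha₂ hb₁ hc₃)
  have h₄ := abs_le.mp (hmul ha₂ hb₃ hc₁)
  have h₅ := abs_le.mp (hmul ha₃ hb₁ hc₂)
  have h₆ := abs_le.mp (hmul ha₃ hb₂ hc₁)
  rw [abs_le, det3]
  constructor <;> linarith

theorem abs_det4_le {a₀ a₁ a₂ a₃ b₀ b₁ b₂ b₃ c₀ c₁ c₂ c₃ d₀ d₁ d₂ d₃ e f g h p q r w : ℝ}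
    (ha : |a₀| ≤ e) (hb : |b₀| ≤ f) (hc : |c₀| ≤ g) (hd : |d₀| ≤ h)
    (ha₁ : |a₁| ≤ p) (ha₂ : |a₂| ≤ p) (ha₃ : |a₃| ≤ p)
    (hb₁ : |b₁| ≤ q) (hb₂ : |b₂| ≤ q) (hb₃ : |b₃| ≤ q)
    (hc₁ : |c₁| ≤ r) (hc₂ : |c₂| ≤ r) (hc₃ : |c₃| ≤ r)
    (hd₁ : |d₁| ≤ w) (hd₂ : |d₂| ≤ w) (hd₃ : |d₃| ≤ w) :
    |det4 a₀ a₁ a₂ a₃ b₀ b₁ b₂ b₃ c₀ c₁ c₂ c₃ d₀ d₁ d₂ d₃| ≤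
      e * (6 * (q * r * w)) + f * (6 * (p * r * w)) + g * (6 * (p * q * w))
        + h * (6 * (p * q * r)) := by
  have hmul : ∀ {u v s t : ℝ}, |u| ≤ s → |v| ≤ t → |u * v| ≤ s * t := by
    intro u v s t hu hv
    have : 0 ≤ s := (abs_nonneg _).trans hu
    rw [abs_mul]
    gcongr
  have h₁ := abs_le.mp (hmul ha (abs_det3_le hb₁ hb₂ hb₃ hc₁ hc₂ hc₃ hd₁ hd₂ hd₃))
  have h₂ := abs_le.mp (hmul hb (abs_det3_le ha₁ ha₂ ha₃ hc₁ hc₂ hc₃ hd₁ hd₂ hd₃))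
  have h₃ := abs_le.mp (hmul hc (abs_det3_le ha₁ ha₂ ha₃ hb₁ hb₂ hb₃ hd₁ hd₂ hd₃))
  have h₄ := abs_le.mp (hmul hd (abs_det3_le ha₁ ha₂ ha₃ hb₁ hb₂ hb₃ hc₁ hc₂ hc₃))
  rw [abs_le, det4]
  constructor <;> linarith

/-- Cramer's rule for the Sylvester matrix of two quadratic polynomials. -/
theorem sylvester_cramer (A₀ A₁ A₂ B₀ B₁ B₂ r₀ r₁ r₂ r₃ : ℤ) :
    ∃ u₀ u₁ : ℤ,
      let v₀ := det4 A₀ A₁ A₂ 0 0 A₀ A₁ A₂ r₀ r₁ r₂ r₃ 0 B₀ B₁ B₂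
      let v₁ := det4 A₀ A₁ A₂ 0 0 A₀ A₁ A₂ B₀ B₁ B₂ 0 r₀ r₁ r₂ r₃
      let D := (A₀ * B₂ - A₂ * B₀) ^ 2 - (A₀ * B₁ - A₁ * B₀) * (A₁ * B₂ - A₂ * B₁)
      D * r₀ = u₀ * A₀ + v₀ * B₀ ∧
      D * r₁ = u₀ * A₁ + u₁ * A₀ + v₀ * B₁ + v₁ * B₀ ∧
      D * r₂ = u₀ * A₂ + u₁ * A₁ + v₀ * B₂ + v₁ * B₁ ∧
      D * r₃ = u₁ * A₂ + v₁ * B₂ := by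
  refine ⟨det4 r₀ r₁ r₂ r₃ 0 A₀ A₁ A₂ B₀ B₁ B₂ 0 0 B₀ B₁ B₂,
    det4 A₀ A₁ A₂ 0 r₀ r₁ r₂ r₃ B₀ B₁ B₂ 0 0 B₀ B₁ B₂, ?_⟩
  simp only [det4, det3]
  refine ⟨?_, ?_, ?_, ?_⟩ <;> ring

/-- The resultant of the quadratic polynomials attached to two consecutive points is `-4`. -/
theorem markoff_resultant {a b c p q r s : ℤ} (hs : s ^ 2 = 1) (hx : a * c - b ^ 2 = 1)
    (hy : p * r - q ^ 2 = 1)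
    (hsymm : (3 * p - s * q) * b + s * p * c = (3 * q - s * r) * a + s * q * b) :
    ((-s * c - 3 * b) * (s * p) - (-s * a) * (s * r - 3 * q)) ^ 2
      - ((-s * c - 3 * b) * (-2 * s * q + 3 * p) - (2 * s * b + 3 * a) * (s * r - 3 * q))
        * ((2 * s * b + 3 * a) * (s * p) - (-s * a) * (-2 * s * q + 3 * p)) = -4 := by
  have hmarkoff : (p * b - q * a) ^ 2 + p ^ 2 + a ^ 2 + 3 * s * a * p * (p * b - q * a) = 0 := by
    linear_combination (s * a * p) * hsymm - p ^ 2 * hx - a ^ 2 * hy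
      + (2 * a * b * p * q - a * c * p ^ 2 - a ^ 2 * p * r) * hs
  have hmixed : (2 * s * b + 3 * a) * (-2 * s * q + 3 * p)
      - 2 * ((-s * c - 3 * b) * (s * p) + (-s * a) * (s * r - 3 * q))
      = 9 * a * p + 6 * s * (p * b - q * a) := by
    linear_combination 2 * s * hsymm
  have hdiscA : (2 * s * b + 3 * a) ^ 2 - 4 * (-s * c - 3 * b) * (-s * a) = 9 * a ^ 2 - 4 := by
    linear_combination -4 * hx + (4 * b ^ 2 - 4 * a * c) * hs
  have hdiscB : (-2 * s * q + 3 * p) ^ 2 - 4 * (s * r - 3 * q) * (s * p) = 9 * p ^ 2 - 4 := by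
    linear_combination -4 * hy + (4 * q ^ 2 - 4 * p * r) * hs
  have hmixed' := congrArg (· ^ 2) hmixed
  have hdisc := congrArg₂ (· * ·) hdiscA hdiscB
  refine mul_left_cancel₀ (four_ne_zero (α := ℤ)) ?_
  linear_combination hmixed' - hdisc + 36 * hmarkoff + 36 * (p * b - q * a) ^ 2 * hs

theorem one_lt_gold : 1 < gold := by
  have h : (1 : ℝ) < √5 := Real.lt_sqrt_of_sq_lt (by norm_num)
  rw [gold]
  linarith

theorem gold_sq : gold ^ 2 = gold + 1 := by
  have h : √5 ^ 2 = (5 : ℝ) := Real.sq_sqrt (by norm_num)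
  rw [gold]
  linear_combination h / 4

theorem gold_cube : gold ^ 3 = 2 * gold + 1 := by
  linear_combination (gold + 1) * gold_sq

/-- The entries `a k`, `b k`, `c k` of a Markoff sequence of symmetric matrices, indexed from `0`,
with the signs `s k` of its recurrence, the norms `X k` and a common constant `C` for all
estimates. -/
structure MarkoffData (ξ : ℝ) where
  s : ℕ → ℤ
  a : ℕ → ℤ
  b : ℕ → ℤ
  c : ℕ → ℤ
  X : ℕ → ℝ
  C : ℝ
  one_le_C : 1 ≤ C
  abs_le_C : |ξ| ≤ C
  sq_sign : ∀ k, s k ^ 2 = 1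
  sign_succ : ∀ k, s (k + 1) = -s k
  det_eq : ∀ k, a k * c k - b k ^ 2 = 1
  rec_a : ∀ k, a (k + 2) = (3 * a (k + 1) - s k * b (k + 1)) * a k + s k * a (k + 1) * b k
  rec_b : ∀ k, b (k + 2) = (3 * a (k + 1) - s k * b (k + 1)) * b k + s k * a (k + 1) * c k
  rec_b' : ∀ k, b (k + 2) = (3 * b (k + 1) - s k * c (k + 1)) * a k + s k * b (k + 1) * b k
  rec_c : ∀ k, c (k + 2) = (3 * b (k + 1) - s k * c (k + 1)) * b k + s k * b (k + 1) * c k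
  abs_a_le : ∀ k, |(a k : ℝ)| ≤ X k
  abs_b_le : ∀ k, |(b k : ℝ)| ≤ X k
  abs_c_le : ∀ k, |(c k : ℝ)| ≤ X k
  le_abs_a : ∀ k, X k ≤ C * |(a k : ℝ)|
  one_le_X : ∀ k, 1 ≤ X k
  strictMono_X : StrictMono X
  tendsto_X : Tendsto X atTop atTop
  approx_a : ∀ k, |(a k : ℝ) * ξ - b k| ≤ C / X k
  approx_b : ∀ k, |(b k : ℝ) * ξ - c k| ≤ C / X k
  X_succ_le : ∀ k, X (k + 1) ≤ C * X k ^ gold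
  X_mul_le : ∀ k, X k * X (k + 1) ≤ C * X (k + 2)

namespace MarkoffData

variable {ξ : ℝ} (d : MarkoffData ξ)

/-- The constant coefficient of the quadratic polynomial attached to the `k`-th point. -/
def q₀ (k : ℕ) : ℤ := -d.s k * d.c k - 3 * d.b k

/-- The linear coefficient of the quadratic polynomial attached to the `k`-th point. -/
def q₁ (k : ℕ) : ℤ := 2 * d.s k * d.b k + 3 * d.a k

/-- The leading coefficient of the quadratic polynomial attached to the `k`-th point. -/
def q₂ (k : ℕ) : ℤ := -d.s k * d.a k

/-- The value at `ξ` of the quadratic polynomial attached to the `k`-th point. -/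
noncomputable def qEval (k : ℕ) : ℝ := d.q₀ k + d.q₁ k * ξ + d.q₂ k * ξ ^ 2

theorem C_pos : 0 < d.C := zero_lt_one.trans_le d.one_le_C

theorem X_pos (k : ℕ) : 0 < d.X k := zero_lt_one.trans_le (d.one_le_X k)

theorem X_le_succ (k : ℕ) : d.X k ≤ d.X (k + 1) := d.strictMono_X.monotone k.le_succ

theorem q₀_eq (k : ℕ) :
    d.b (k + 1) * d.c (k + 2) - d.c (k + 1) * d.b (k + 2) = d.q₀ k := by
  rw [q₀]
  linear_combination d.b (k + 1) * d.rec_c k - d.c (k + 1) * d.rec_b k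
    - (d.s k * d.c k + 3 * d.b k) * d.det_eq (k + 1)

theorem q₁_eq (k : ℕ) :
    -(d.a (k + 1) * d.c (k + 2) - d.c (k + 1) * d.a (k + 2)) = d.q₁ k := by
  rw [q₁]
  linear_combination -d.a (k + 1) * d.rec_c k + d.c (k + 1) * d.rec_a k
    + d.b (k + 1) * d.rec_b k - d.b (k + 1) * d.rec_b' k
    + (2 * d.s k * d.b k + 3 * d.a k) * d.det_eq (k + 1)

theorem q₂_eq (k : ℕ) :
    d.a (k + 1) * d.b (k + 2) - d.b (k + 1) * d.a (k + 2) = d.q₂ k := by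
  rw [q₂]
  linear_combination d.a (k + 1) * d.rec_b' k - d.b (k + 1) * d.rec_a k
    - d.s k * d.a k * d.det_eq (k + 1)

theorem resultant_eq (k : ℕ) :
    (d.q₀ k * d.q₂ (k + 1) - d.q₂ k * d.q₀ (k + 1)) ^ 2
      - (d.q₀ k * d.q₁ (k + 1) - d.q₁ k * d.q₀ (k + 1))
        * (d.q₁ k * d.q₂ (k + 1) - d.q₂ k * d.q₁ (k + 1)) = -4 := by
  have h := markoff_resultant (d.sq_sign k) (d.det_eq k) (d.det_eq (k + 1))
    ((d.rec_b k).symm.trans (d.rec_b' k))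
  simp only [q₀, q₁, q₂, d.sign_succ]
  linear_combination h

theorem det_points (k : ℕ) :
    det3 (d.a k) (d.b k) (d.c k) (d.a (k + 1)) (d.b (k + 1)) (d.c (k + 1))
      (d.a (k + 2)) (d.b (k + 2)) (d.c (k + 2)) = -2 * d.s k := by
  have hdet : det3 (d.a k) (d.b k) (d.c k) (d.a (k + 1)) (d.b (k + 1)) (d.c (k + 1))
      (d.a (k + 2)) (d.b (k + 2)) (d.c (k + 2)) =
      d.a k * d.q₀ k + d.b k * d.q₁ k + d.c k * d.q₂ k := by
    rw [← d.q₀_eq, ← d.q₁_eq, ← d.q₂_eq, det3]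
    ring
  rw [hdet, q₀, q₁, q₂]
  linear_combination -2 * d.s k * d.det_eq k

theorem det_points_ne_zero (k : ℕ) :
    det3 (d.a k) (d.b k) (d.c k) (d.a (k + 1)) (d.b (k + 1)) (d.c (k + 1))
      (d.a (k + 2)) (d.b (k + 2)) (d.c (k + 2)) ≠ 0 := by
  rw [d.det_points]
  intro h
  have hs : d.s k = 0 := by linarith
  simpa [hs] using d.sq_sign k

theorem q_apply_ne_zero (k : ℕ) :
    d.q₀ k * d.a (k + 3) + d.q₁ k * d.b (k + 3) + d.q₂ k * d.c (k + 3) ≠ 0 := by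
  have h := d.det_points_ne_zero (k + 1)
  rw [← d.q₀_eq, ← d.q₁_eq, ← d.q₂_eq]
  convert h using 1
  simp only [det3, show k + 1 + 1 = k + 2 from rfl, show k + 1 + 2 = k + 3 from rfl]
  ring

theorem abs_sign (k : ℕ) : |(d.s k : ℝ)| = 1 := by
  have h : ((d.s k : ℝ)) ^ 2 = 1 := by exact_mod_cast d.sq_sign k
  have := abs_eq_abs.mpr (sq_eq_sq_iff_eq_or_eq_neg.mp (h.trans (one_pow 2).symm))
  simpa using this

theorem abs_q₀_le (k : ℕ) : |(d.q₀ k : ℝ)| ≤ 5 * d.X k := by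
  have hs := d.abs_sign k
  have hb := d.abs_b_le k
  have hsc : |(d.s k : ℝ) * d.c k| ≤ d.X k := by
    rw [abs_mul, hs, one_mul]; exact d.abs_c_le k
  have := d.X_pos k
  rw [abs_le] at *
  simp only [q₀]
  push_cast
  constructor <;> linarith

theorem abs_q₁_le (k : ℕ) : |(d.q₁ k : ℝ)| ≤ 5 * d.X k := by
  have hs := d.abs_sign k
  have ha := d.abs_a_le k
  have hsb : |(d.s k : ℝ) * d.b k| ≤ d.X k := by
    rw [abs_mul, hs, one_mul]; exact d.abs_b_le k
  rw [abs_le] at *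
  simp only [q₁]
  push_cast
  constructor <;> linarith

theorem abs_q₂_eq (k : ℕ) : |(d.q₂ k : ℝ)| = |(d.a k : ℝ)| := by
  simp [q₂, abs_mul, d.abs_sign]

theorem abs_q₂_le (k : ℕ) : |(d.q₂ k : ℝ)| ≤ 5 * d.X k := by
  rw [abs_q₂_eq]
  linarith [d.abs_a_le k, d.X_pos k]

theorem X_le_abs_q₂ (k : ℕ) : d.X k ≤ d.C * |(d.q₂ k : ℝ)| := by
  rw [abs_q₂_eq]
  exact d.le_abs_a k

theorem q₂_ne_zero (k : ℕ) : d.q₂ k ≠ 0 := by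
  intro h
  have := d.X_le_abs_q₂ k
  simp only [h, Int.cast_zero, abs_zero, mul_zero] at this
  exact absurd (d.X_pos k) this.not_gt

theorem qEval_eq (k : ℕ) : d.qEval k =
    (d.a (k + 1) * ξ - d.b (k + 1)) * (d.b (k + 2) * ξ - d.c (k + 2))
      - (d.b (k + 1) * ξ - d.c (k + 1)) * (d.a (k + 2) * ξ - d.b (k + 2)) := by
  rw [qEval, ← d.q₀_eq, ← d.q₁_eq, ← d.q₂_eq]
  push_cast
  ring

theorem abs_qEval_le (k : ℕ) :
    |d.qEval k| ≤ 2 * d.C ^ 2 / (d.X (k + 1) * d.X (k + 2)) := by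
  have h : ∀ {u v : ℝ}, |u| ≤ d.C / d.X (k + 1) → |v| ≤ d.C / d.X (k + 2) →
      |u * v| ≤ d.C / d.X (k + 1) * (d.C / d.X (k + 2)) := by
    intro u v hu hv
    have := (abs_nonneg _).trans hu
    rw [abs_mul]
    gcongr
  have h₁ := h (d.approx_a (k + 1)) (d.approx_b (k + 2))
  have h₂ := h (d.approx_b (k + 1)) (d.approx_a (k + 2))
  rw [qEval_eq]
  calc _ ≤ _ := abs_sub _ _
    _ ≤ d.C / d.X (k + 1) * (d.C / d.X (k + 2)) + d.C / d.X (k + 1) * (d.C / d.X (k + 2)) :=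
      add_le_add h₁ h₂
    _ = _ := by
      have := d.X_pos (k + 1)
      have := d.X_pos (k + 2)
      field_simp
      ring

/-- A quadratic polynomial which is small at `ξ` is small as a linear form on the points. -/
theorem abs_apply_le (k : ℕ) {t₀ t₁ t₂ : ℤ} {N : ℝ} (h₁ : |(t₁ : ℝ)| ≤ N) (h₂ : |(t₂ : ℝ)| ≤ N) :
    |((t₀ * d.a k + t₁ * d.b k + t₂ * d.c k : ℤ) : ℝ)| ≤
      d.X k * |t₀ + t₁ * ξ + t₂ * ξ ^ 2| + N * (3 * d.C ^ 2) / d.X k := by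
  have hX := d.X_pos k
  have hN : 0 ≤ N := (abs_nonneg _).trans h₁
  have hC := d.one_le_C
  have hδ : 0 ≤ d.C / d.X k := (abs_nonneg _).trans (d.approx_a k)
  have key : ((t₀ * d.a k + t₁ * d.b k + t₂ * d.c k : ℤ) : ℝ) =
      d.a k * (t₀ + t₁ * ξ + t₂ * ξ ^ 2) - t₁ * (d.a k * ξ - d.b k)
        - t₂ * (ξ * (d.a k * ξ - d.b k)) - t₂ * (d.b k * ξ - d.c k) := by
    push_cast
    ring
  rw [key]
  calc _ ≤ |(d.a k : ℝ) * (t₀ + t₁ * ξ + t₂ * ξ ^ 2)| + |t₁ * (d.a k * ξ - d.b k)|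
        + |t₂ * (ξ * (d.a k * ξ - d.b k))| + |t₂ * (d.b k * ξ - d.c k)| :=
        (abs_sub _ _).trans (add_le_add_left ((abs_sub _ _).trans
          (add_le_add_left (abs_sub _ _) _)) _)
    _ ≤ d.X k * |t₀ + t₁ * ξ + t₂ * ξ ^ 2| + N * (d.C / d.X k) + N * (d.C * (d.C / d.X k))
        + N * (d.C / d.X k) := by
      simp only [abs_mul]
      have := d.abs_a_le k
      have := d.approx_a k
      have := d.approx_b k
      have := d.abs_le_C
      have := d.C_pos
      gcongr
    _ ≤ _ := by
      have h : N * (d.C / d.X k) ≤ N * (d.C * (d.C / d.X k)) := by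
        gcongr
        exact le_mul_of_one_le_left hδ hC
      have : N * (3 * d.C ^ 2) / d.X k = 3 * (N * (d.C * (d.C / d.X k))) := by ring
      rw [this]
      linarith

theorem qEval_ne_zero (k : ℕ) : d.qEval k ≠ 0 := by
  intro h
  obtain ⟨J, hJ⟩ :=
    (d.tendsto_X.eventually_gt_atTop (5 * d.X k * (3 * d.C ^ 2))).exists_forall_of_atTop
  have hzero : ∀ j ≥ J, d.q₀ k * d.a j + d.q₁ k * d.b j + d.q₂ k * d.c j = 0 := by
    intro j hj
    have h' := d.abs_apply_le j (t₀ := d.q₀ k) (d.abs_q₁_le k) (d.abs_q₂_le k)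
    rw [← qEval, h, abs_zero, mul_zero, zero_add] at h'
    have h'' := h'.trans_lt ((div_lt_one (d.X_pos j)).mpr (hJ j hj))
    exact Int.abs_lt_one_iff.mp (by exact_mod_cast h'')
  have h₀ := hzero J le_rfl
  have h₁ := hzero (J + 1) (by omega)
  have h₂ := hzero (J + 2) (by omega)
  refine mul_ne_zero (d.q₂_ne_zero k) (d.det_points_ne_zero J) ?_
  rw [det3]
  linear_combination (d.a (J + 1) * d.b (J + 2) - d.b (J + 1) * d.a (J + 2)) * h₀
    - (d.a J * d.b (J + 2) - d.b J * d.a (J + 2)) * h₁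
    + (d.a J * d.b (J + 1) - d.b J * d.a (J + 1)) * h₂

theorem exists_qEval_ge : ∃ e > 0, ∀ k, e ≤ |d.qEval k| * d.X (k + 3) := by
  obtain ⟨J, hJ⟩ :=
    (d.tendsto_X.eventually_ge_atTop (5 * (3 * d.C ^ 2) * (2 * d.C))).exists_forall_of_atTop
  have hlarge : ∀ k ≥ J, 1 / 2 ≤ |d.qEval k| * d.X (k + 3) := by
    intro k hk
    have h := d.abs_apply_le (k + 3) (t₀ := d.q₀ k) (d.abs_q₁_le k) (d.abs_q₂_le k)
    have hone : (1 : ℝ) ≤ |((d.q₀ k * d.a (k + 3) + d.q₁ k * d.b (k + 3)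
        + d.q₂ k * d.c (k + 3) : ℤ) : ℝ)| := by
      exact_mod_cast Int.one_le_abs (d.q_apply_ne_zero k)
    have herr : 5 * d.X k * (3 * d.C ^ 2) / d.X (k + 3) ≤ 1 / 2 := by
      rw [div_le_iff₀ (d.X_pos _)]
      have h₁ := d.X_mul_le (k + 1)
      have h₂ : d.X k * d.X (k + 1) ≤ d.X (k + 1) * d.X (k + 2) := by
        have := d.X_le_succ k
        have := d.X_le_succ (k + 1)
        have := (d.X_pos k).le
        have := (d.X_pos (k + 1)).le
        gcongr
      have h₃ := hJ (k + 1) (by omega)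
      have hX := d.X_pos k
      have hC := d.C_pos
      have h₄ : 5 * (3 * d.C ^ 2) * (2 * d.C) * d.X k ≤ d.C * d.X (k + 3) := by
        calc _ ≤ d.X (k + 1) * d.X k := by gcongr
          _ ≤ _ := by linarith
      refine le_of_mul_le_mul_left ?_ hC
      linarith
    rw [← qEval] at h
    linarith
  have hsmall : ∀ n, ∃ e > 0, ∀ k < n, e ≤ |d.qEval k| * d.X (k + 3) := by
    intro n
    induction n with
    | zero => exact ⟨1, one_pos, by simp⟩
    | succ n ih =>
      obtain ⟨e, he, h⟩ := ih
      refine ⟨min e (|d.qEval n| * d.X (n + 3)),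
        lt_min he (mul_pos (abs_pos.mpr (d.qEval_ne_zero n)) (d.X_pos _)), ?_⟩
      intro k hk
      rcases Nat.lt_succ_iff_lt_or_eq.mp hk with hk | rfl
      · exact (min_le_left _ _).trans (h k hk)
      · exact min_le_right _ _
  obtain ⟨e, he, h⟩ := hsmall J
  refine ⟨min e (1 / 2), by positivity, fun k => ?_⟩
  rcases lt_or_ge k J with hk | hk
  · exact (min_le_left _ _).trans (h k hk)
  · exact (min_le_right _ _).trans (hlarge k hk)

/-- Every scale falls between two consecutive norms of points, up to a constant. -/
theorem exists_scale (K : ℝ) :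
    ∃ G ≥ 1, ∀ N ≥ 1, ∃ k, K * N ≤ d.X (k + 1) ∧ d.X k ≤ G * N := by
  refine ⟨max (d.X 0) K, (d.one_le_X 0).trans (le_max_left _ _), fun N hN => ?_⟩
  have hex : ∃ k, K * N ≤ d.X (k + 1) :=
    ((d.tendsto_X.comp (tendsto_add_atTop_nat 1)).eventually_ge_atTop (K * N)).exists
  classical
  refine ⟨Nat.find hex, Nat.find_spec hex, ?_⟩
  have hN₀ : 0 ≤ N := zero_le_one.trans hN
  rcases hk : Nat.find hex with _ | k
  · exact (le_mul_of_one_le_right (d.X_pos 0).le hN).trans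
      (mul_le_mul_of_nonneg_right (le_max_left _ _) hN₀)
  · have h := not_le.mp (Nat.find_min hex (by omega : k < Nat.find hex))
    exact h.le.trans (mul_le_mul_of_nonneg_right (le_max_right _ _) hN₀)

theorem exists_X_add_three_le : ∃ E > 0, ∀ k, d.X (k + 3) ≤ E * d.X k ^ (gold ^ 3) := by
  have hg : 0 ≤ gold := (zero_lt_one.trans one_lt_gold).le
  have hC := d.C_pos
  refine ⟨d.C * (d.C * d.C ^ gold) ^ gold, by positivity, fun k => ?_⟩
  have hX := (d.X_pos k).le
  have h₂ : d.X (k + 2) ≤ d.C * d.C ^ gold * d.X k ^ (gold * gold) := by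
    calc _ ≤ d.C * d.X (k + 1) ^ gold := d.X_succ_le (k + 1)
      _ ≤ d.C * (d.C * d.X k ^ gold) ^ gold := by
        have := (d.X_pos (k + 1)).le
        gcongr
        exact d.X_succ_le k
      _ = _ := by
        rw [Real.mul_rpow hC.le (by positivity), ← Real.rpow_mul hX, mul_assoc]
  calc _ ≤ d.C * d.X (k + 2) ^ gold := d.X_succ_le (k + 2)
    _ ≤ d.C * (d.C * d.C ^ gold * d.X k ^ (gold * gold)) ^ gold := by
      have := (d.X_pos (k + 2)).le
      gcongr
    _ = _ := by
      rw [Real.mul_rpow (by positivity) (by positivity), ← Real.rpow_mul hX, mul_assoc, pow_three,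
        mul_assoc d.C]

theorem exists_linear_ge (d : MarkoffData ξ) : ∃ f > 0, ∀ (u₀ u₁ : ℤ) (m : ℝ), 1 ≤ m → |(u₀ : ℝ)| ≤ m →
    |(u₁ : ℝ)| ≤ m → (u₀ ≠ 0 ∨ u₁ ≠ 0) → f ≤ |u₀ + u₁ * ξ| * m ^ gold := by
  have hC := d.C_pos
  obtain ⟨G, hG, hscale⟩ := d.exists_scale (2 * (3 * d.C ^ 2))
  refine ⟨1 / (2 * d.C * (d.C * G ^ gold)), by positivity, fun u₀ u₁ m hm h₀ h₁ hu => ?_⟩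
  obtain ⟨k, hk, hk'⟩ := hscale m hm
  have hg : 0 ≤ gold := (zero_lt_one.trans one_lt_gold).le
  have hX := d.X_pos (k + 1)
  have herr : m * (3 * d.C ^ 2) / d.X (k + 1) ≤ 1 / 2 := by
    rw [div_le_iff₀ hX]
    linarith
  have hm0 : |((0 : ℤ) : ℝ)| ≤ m := by simpa using zero_le_one.trans hm
  have hrow₁ := d.abs_apply_le (k + 1) (t₀ := u₀) h₁ hm0
  have hrow₂ := d.abs_apply_le (k + 1) (t₀ := 0) h₀ h₁
  have hCU : |u₀ + u₁ * ξ| ≤ d.C * |u₀ + u₁ * ξ| :=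
    le_mul_of_one_le_left (abs_nonneg _) d.one_le_C
  have hmain : 1 / 2 ≤ d.X (k + 1) * (d.C * |u₀ + u₁ * ξ|) := by
    by_cases hz : u₀ * d.a (k + 1) + u₁ * d.b (k + 1) + 0 * d.c (k + 1) = 0
    · have hz' : 0 * d.a (k + 1) + u₀ * d.b (k + 1) + u₁ * d.c (k + 1) ≠ 0 := by
        intro hz'
        have hdet := d.det_eq (k + 1)
        have hu₀ : u₀ = 0 := by
          linear_combination -u₀ * hdet + d.c (k + 1) * hz - d.b (k + 1) * hz'
        have hu₁ : u₁ = 0 := by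
          linear_combination -u₁ * hdet + d.a (k + 1) * hz' - d.b (k + 1) * hz
        exact hu.elim (· hu₀) (· hu₁)
      have hone := (Int.cast_le (R := ℝ)).mpr (Int.one_le_abs hz')
      rw [Int.cast_abs, Int.cast_one] at hone
      have hev : |((0 : ℤ) : ℝ) + u₀ * ξ + u₁ * ξ ^ 2| ≤ d.C * |u₀ + u₁ * ξ| := by
        rw [show ((0 : ℤ) : ℝ) + u₀ * ξ + u₁ * ξ ^ 2 = ξ * (u₀ + u₁ * ξ) by push_cast; ring,
          abs_mul]
        exact mul_le_mul_of_nonneg_right d.abs_le_C (abs_nonneg _)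
      have := (hone.trans hrow₂).trans
        (add_le_add (mul_le_mul_of_nonneg_left hev hX.le) herr)
      linarith
    · have hone := (Int.cast_le (R := ℝ)).mpr (Int.one_le_abs hz)
      rw [Int.cast_abs, Int.cast_one] at hone
      have hev : |u₀ + u₁ * ξ + ((0 : ℤ) : ℝ) * ξ ^ 2| ≤ d.C * |u₀ + u₁ * ξ| := by
        simpa using hCU
      have := (hone.trans hrow₁).trans
        (add_le_add (mul_le_mul_of_nonneg_left hev hX.le) herr)
      linarith
  have hXm : d.X (k + 1) ≤ d.C * G ^ gold * m ^ gold := by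
    calc _ ≤ d.C * d.X k ^ gold := d.X_succ_le k
      _ ≤ d.C * (G * m) ^ gold := by
        have := (d.X_pos k).le
        gcongr
      _ = _ := by rw [Real.mul_rpow (by linarith) (by linarith), mul_assoc]
  rw [div_le_iff₀ (by positivity)]
  have := mul_le_mul_of_nonneg_right hXm (by positivity : 0 ≤ d.C * |u₀ + u₁ * ξ|)
  linarith

/-- The coordinates of a cubic polynomial along the quadratic polynomials attached to the next
point are small when the cubic polynomial is small at `ξ`. -/
theorem exists_coord_le : ∃ K > 0, ∀ (k : ℕ) (r₀ r₁ r₂ r₃ : ℤ) (N : ℝ),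
    |(r₁ : ℝ)| ≤ N → |(r₂ : ℝ)| ≤ N → |(r₃ : ℝ)| ≤ N →
    let ρ := |r₀ + r₁ * ξ + r₂ * ξ ^ 2 + r₃ * ξ ^ 3|
    let v₀ := det4 (d.q₀ k) (d.q₁ k) (d.q₂ k) 0 0 (d.q₀ k) (d.q₁ k) (d.q₂ k)
      r₀ r₁ r₂ r₃ 0 (d.q₀ (k + 1)) (d.q₁ (k + 1)) (d.q₂ (k + 1))
    let v₁ := det4 (d.q₀ k) (d.q₁ k) (d.q₂ k) 0 0 (d.q₀ k) (d.q₁ k) (d.q₂ k)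
      (d.q₀ (k + 1)) (d.q₁ (k + 1)) (d.q₂ (k + 1)) 0 r₀ r₁ r₂ r₃
    |(v₀ : ℝ)| ≤ 750 * ρ * (d.X k ^ 2 * d.X (k + 1)) + K * N / d.X (k + 1) ∧
    |(v₁ : ℝ)| ≤ 750 * ρ * (d.X k ^ 2 * d.X (k + 1)) + K * N / d.X (k + 1) := by
  have hC := d.C_pos
  refine ⟨900 * d.C ^ 4, by positivity, fun k r₀ r₁ r₂ r₃ N h₁ h₂ h₃ => ?_⟩
  intro ρ v₀ v₁
  have hN : 0 ≤ N := (abs_nonneg _).trans h₁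
  have hX := d.X_pos k
  have hX₁ := d.X_pos (k + 1)
  have hX₂ := d.X_pos (k + 2)
  set ε := 2 * d.C ^ 2 / (d.X (k + 1) * d.X (k + 2)) with hε
  have hε₀ : 0 ≤ ε := by positivity
  have hA : |d.qEval k| ≤ d.C * ε :=
    (d.abs_qEval_le k).trans (le_mul_of_one_le_left hε₀ d.one_le_C)
  have hξA : |ξ * d.qEval k| ≤ d.C * ε := by
    rw [abs_mul]
    have := d.abs_qEval_le k
    have := d.abs_le_C
    gcongr
  set η := 2 * d.C ^ 2 / (d.X (k + 2) * d.X (k + 3)) with hη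
  have hη₀ : 0 ≤ η := div_nonneg (by positivity) (mul_pos hX₂ (d.X_pos _)).le
  have hB : |d.qEval (k + 1)| ≤ d.C * η :=
    (d.abs_qEval_le (k + 1)).trans (le_mul_of_one_le_left hη₀ d.one_le_C)
  have hξB : |ξ * d.qEval (k + 1)| ≤ d.C * η := by
    rw [abs_mul]
    have := d.abs_qEval_le (k + 1)
    have := d.abs_le_C
    gcongr
  have hηε : η * d.X k ≤ ε * d.X (k + 1) := by
    have hle := d.X_le_succ k
    have hηle : η ≤ ε := by
      rw [hη, hε, mul_comm (d.X (k + 2))]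
      have := d.strictMono_X.monotone (show k + 1 ≤ k + 3 by omega)
      gcongr
    gcongr
  have hεX : ε * (d.X k * d.X (k + 1)) ≤ 2 * d.C ^ 3 / d.X (k + 1) := by
    rw [hε, div_mul_eq_mul_div, div_le_div_iff₀ (by positivity) hX₁]
    have := d.X_mul_le k
    calc _ = 2 * d.C ^ 2 * d.X (k + 1) * (d.X k * d.X (k + 1)) := by ring
      _ ≤ 2 * d.C ^ 2 * d.X (k + 1) * (d.C * d.X (k + 2)) := by gcongr
      _ = _ := by ring
  have hfinal : d.C * ε * (6 * (5 * d.X k * N * (5 * d.X (k + 1))))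
      + d.C * ε * (6 * (5 * d.X k * N * (5 * d.X (k + 1))))
      + ρ * (6 * (5 * d.X k * (5 * d.X k) * (5 * d.X (k + 1))))
      + d.C * η * (6 * (5 * d.X k * (5 * d.X k) * N))
      ≤ 750 * ρ * (d.X k ^ 2 * d.X (k + 1)) + 900 * d.C ^ 4 * N / d.X (k + 1) := by
    have hm₁ := mul_le_mul_of_nonneg_left hηε (by positivity : 0 ≤ 150 * d.C * N * d.X k)
    have hm₂ := mul_le_mul_of_nonneg_left hεX (by positivity : 0 ≤ 450 * d.C * N)
    have : 900 * d.C ^ 4 * N / d.X (k + 1)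
        = 450 * d.C * N * (2 * d.C ^ 3 / d.X (k + 1)) := by ring
    rw [this]
    linarith
  have hz : |(0 : ℝ)| ≤ 5 * d.X k := by simpa using hX.le
  have hz₁ : |(0 : ℝ)| ≤ 5 * d.X (k + 1) := by simpa using hX₁.le
  constructor
  · have hcast : (v₀ : ℝ) = det4 (d.qEval k) (d.q₁ k) (d.q₂ k) 0
        (ξ * d.qEval k) (d.q₀ k) (d.q₁ k) (d.q₂ k)
        (r₀ + r₁ * ξ + r₂ * ξ ^ 2 + r₃ * ξ ^ 3) r₁ r₂ r₃
        (ξ * d.qEval (k + 1)) (d.q₀ (k + 1)) (d.q₁ (k + 1)) (d.q₂ (k + 1)) := by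
      simp only [v₀, det4, det3, qEval]
      push_cast
      ring
    rw [hcast]
    refine (abs_det4_le hA hξA le_rfl hξB (d.abs_q₁_le k) (d.abs_q₂_le k) hz (d.abs_q₀_le k)
      (d.abs_q₁_le k) (d.abs_q₂_le k) h₁ h₂ h₃ (d.abs_q₀_le _) (d.abs_q₁_le _)
      (d.abs_q₂_le _)).trans hfinal
  · have hcast : (v₁ : ℝ) = det4 (d.qEval k) (d.q₁ k) (d.q₂ k) 0
        (ξ * d.qEval k) (d.q₀ k) (d.q₁ k) (d.q₂ k)
        (d.qEval (k + 1)) (d.q₁ (k + 1)) (d.q₂ (k + 1)) 0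
        (r₀ + r₁ * ξ + r₂ * ξ ^ 2 + r₃ * ξ ^ 3) r₁ r₂ r₃ := by
      simp only [v₁, det4, det3, qEval]
      push_cast
      ring
    rw [hcast]
    refine (abs_det4_le hA hξA hB le_rfl (d.abs_q₁_le k) (d.abs_q₂_le k) hz (d.abs_q₀_le k)
      (d.abs_q₁_le k) (d.abs_q₂_le k) (d.abs_q₁_le _) (d.abs_q₂_le _) hz₁ h₁ h₂ h₃).trans ?_
    linarith

/-- Lower bound for the value at `ξ` of a multiple of the quadratic polynomial attached to a
point. -/
theorem exists_multiple_ge : ∃ e > 0, ∀ (k : ℕ) (r₀ r₁ r₂ r₃ u₀ u₁ : ℤ) (N : ℝ), 1 ≤ N →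
    |(r₂ : ℝ)| ≤ N → |(r₃ : ℝ)| ≤ N → (u₀ ≠ 0 ∨ u₁ ≠ 0) →
    -4 * r₀ = u₀ * d.q₀ k → -4 * r₁ = u₀ * d.q₁ k + u₁ * d.q₀ k →
    -4 * r₂ = u₀ * d.q₂ k + u₁ * d.q₁ k → -4 * r₃ = u₁ * d.q₂ k →
    e ≤ |r₀ + r₁ * ξ + r₂ * ξ ^ 2 + r₃ * ξ ^ 3| * N ^ (gold ^ 3) := by
  obtain ⟨e, he, hq⟩ := d.exists_qEval_ge
  obtain ⟨E, hE, hX⟩ := d.exists_X_add_three_le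
  obtain ⟨f, hf, hlin⟩ := d.exists_linear_ge
  have hC := d.C_pos
  refine ⟨e * f / (4 * E * (d.C * (4 + 20 * d.C)) ^ (gold ^ 3)), by positivity, ?_⟩
  intro k r₀ r₁ r₂ r₃ u₀ u₁ N hN hr₂ hr₃ hu e₀ e₁ e₂ e₃
  set m : ℝ := max |(u₀ : ℝ)| |(u₁ : ℝ)| with hm
  have hm₁ : 1 ≤ m := by
    rcases hu with hu | hu
    · exact le_max_of_le_left (by exact_mod_cast Int.one_le_abs hu)
    · exact le_max_of_le_right (by exact_mod_cast Int.one_le_abs hu)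
  have hU := hlin u₀ u₁ m hm₁ (le_max_left _ _) (le_max_right _ _) hu
  have e₀' : -4 * (r₀ : ℝ) = u₀ * d.q₀ k := by exact_mod_cast e₀
  have e₁' : -4 * (r₁ : ℝ) = u₀ * d.q₁ k + u₁ * d.q₀ k := by exact_mod_cast e₁
  have e₂' : -4 * (r₂ : ℝ) = u₀ * d.q₂ k + u₁ * d.q₁ k := by exact_mod_cast e₂
  have e₃' : -4 * (r₃ : ℝ) = u₁ * d.q₂ k := by exact_mod_cast e₃
  have hval : 4 * |r₀ + r₁ * ξ + r₂ * ξ ^ 2 + r₃ * ξ ^ 3| = |u₀ + u₁ * ξ| * |d.qEval k| := by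
    rw [← abs_mul, show (u₀ + u₁ * ξ) * d.qEval k
      = -4 * (r₀ + r₁ * ξ + r₂ * ξ ^ 2 + r₃ * ξ ^ 3) by
        rw [qEval]
        linear_combination -e₀' - ξ * e₁' - ξ ^ 2 * e₂' - ξ ^ 3 * e₃', abs_mul]
    norm_num
  have hu₁ : |(u₁ : ℝ)| * |(d.q₂ k : ℝ)| ≤ 4 * N := by
    rw [← abs_mul, ← e₃', abs_mul]
    norm_num
    exact hr₃
  have hu₀ : |(u₀ : ℝ)| * |(d.q₂ k : ℝ)| ≤ (4 + 20 * d.C) * N := by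
    have h : |(u₀ : ℝ) * d.q₂ k| ≤ 4 * |(r₂ : ℝ)| + |(u₁ : ℝ)| * |(d.q₁ k : ℝ)| := by
      rw [show (u₀ : ℝ) * d.q₂ k = -4 * r₂ - u₁ * d.q₁ k by linear_combination -e₂']
      refine (abs_sub _ _).trans (le_of_eq ?_)
      rw [abs_mul, abs_mul]
      norm_num
    have h' : |(u₁ : ℝ)| * |(d.q₁ k : ℝ)| ≤ 5 * d.C * (|(u₁ : ℝ)| * |(d.q₂ k : ℝ)|) := by
      calc _ ≤ |(u₁ : ℝ)| * (5 * (d.C * |(d.q₂ k : ℝ)|)) := by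
            gcongr
            linarith [d.abs_q₁_le k, d.X_le_abs_q₂ k]
        _ = _ := by ring
    have h'' := mul_le_mul_of_nonneg_left hu₁ (by positivity : 0 ≤ 5 * d.C)
    rw [abs_mul] at h
    linarith
  have hmX : m * d.X k ≤ d.C * (4 + 20 * d.C) * N := by
    have hmq : m * |(d.q₂ k : ℝ)| ≤ (4 + 20 * d.C) * N := by
      rw [hm, max_mul_of_nonneg _ _ (abs_nonneg _)]
      refine max_le hu₀ (hu₁.trans ?_)
      have := mul_pos hC (zero_lt_one.trans_le hN)
      linarith
    calc _ ≤ m * (d.C * |(d.q₂ k : ℝ)|) := by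
          have := d.X_le_abs_q₂ k
          gcongr
      _ = d.C * (m * |(d.q₂ k : ℝ)|) := by ring
      _ ≤ d.C * ((4 + 20 * d.C) * N) := by gcongr
      _ = _ := by ring
  have hXk := d.X_pos k
  have hmg : m ^ gold ≤ m ^ (gold ^ 3) :=
    Real.rpow_le_rpow_of_exponent_le hm₁ (by linarith [gold_cube, one_lt_gold])
  have hg : 0 ≤ gold ^ 3 := pow_nonneg (zero_lt_one.trans one_lt_gold).le 3
  have hpow : (m * d.X k) ^ (gold ^ 3) ≤
      (d.C * (4 + 20 * d.C)) ^ (gold ^ 3) * N ^ (gold ^ 3) := by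
    rw [← Real.mul_rpow (by positivity) (by linarith)]
    gcongr
  rw [Real.mul_rpow (by linarith) hXk.le] at hpow
  rw [div_le_iff₀ (by positivity)]
  calc e * f ≤ |d.qEval k| * d.X (k + 3) * (|u₀ + u₁ * ξ| * m ^ gold) :=
        mul_le_mul (hq k) hU hf.le (he.le.trans (hq k))
    _ ≤ |d.qEval k| * (E * d.X k ^ (gold ^ 3)) * (|u₀ + u₁ * ξ| * m ^ (gold ^ 3)) := by
      have := hX k
      gcongr
    _ = |u₀ + u₁ * ξ| * |d.qEval k| * E * (m ^ (gold ^ 3) * d.X k ^ (gold ^ 3)) := by ring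
    _ ≤ |u₀ + u₁ * ξ| * |d.qEval k| * E *
        ((d.C * (4 + 20 * d.C)) ^ (gold ^ 3) * N ^ (gold ^ 3)) := by gcongr
    _ = _ := by
      rw [← hval]
      ring

/-- A nonzero cubic polynomial satisfies the strong lower bound at `ξ`, unless it is a multiple of
the quadratic polynomial attached to some point, in which case it satisfies the weak one. -/
theorem exists_cubic_ge : ∃ e > 0, ∀ (r₀ r₁ r₂ r₃ : ℤ) (N : ℝ), 1 ≤ N →
    |(r₁ : ℝ)| ≤ N → |(r₂ : ℝ)| ≤ N → |(r₃ : ℝ)| ≤ N →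
    (r₀ ≠ 0 ∨ r₁ ≠ 0 ∨ r₂ ≠ 0 ∨ r₃ ≠ 0) →
    let ρ := |r₀ + r₁ * ξ + r₂ * ξ ^ 2 + r₃ * ξ ^ 3|
    e ≤ ρ * N ^ (1 + gold ^ 2) ∨
    (e ≤ ρ * N ^ (gold ^ 3) ∧ ∃ (k : ℕ) (u₀ u₁ : ℤ),
      -4 * r₀ = u₀ * d.q₀ k ∧ -4 * r₁ = u₀ * d.q₁ k + u₁ * d.q₀ k ∧
      -4 * r₂ = u₀ * d.q₂ k + u₁ * d.q₁ k ∧ -4 * r₃ = u₁ * d.q₂ k) := by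
  obtain ⟨K, hK, hcoord⟩ := d.exists_coord_le
  obtain ⟨f, hf, hmult⟩ := d.exists_multiple_ge
  obtain ⟨G, hG, hscale⟩ := d.exists_scale (2 * K)
  have hC := d.C_pos
  refine ⟨min f (1 / (1500 * (d.C * G ^ (1 + gold ^ 2)))), by positivity, ?_⟩
  intro r₀ r₁ r₂ r₃ N hN h₁ h₂ h₃ hr ρ
  obtain ⟨k, hk, hk'⟩ := hscale N hN
  have hcoord := hcoord k r₀ r₁ r₂ r₃ N h₁ h₂ h₃
  obtain ⟨u₀, u₁, hcramer⟩ := sylvester_cramer (d.q₀ k) (d.q₁ k) (d.q₂ k)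
    (d.q₀ (k + 1)) (d.q₁ (k + 1)) (d.q₂ (k + 1)) r₀ r₁ r₂ r₃
  rw [d.resultant_eq] at hcramer
  dsimp only at hcoord hcramer
  generalize det4 (d.q₀ k) (d.q₁ k) (d.q₂ k) 0 0 (d.q₀ k) (d.q₁ k) (d.q₂ k)
    r₀ r₁ r₂ r₃ 0 (d.q₀ (k + 1)) (d.q₁ (k + 1)) (d.q₂ (k + 1)) = v₀ at hcoord hcramer
  generalize det4 (d.q₀ k) (d.q₁ k) (d.q₂ k) 0 0 (d.q₀ k) (d.q₁ k) (d.q₂ k)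
    (d.q₀ (k + 1)) (d.q₁ (k + 1)) (d.q₂ (k + 1)) 0 r₀ r₁ r₂ r₃ = v₁ at hcoord hcramer
  obtain ⟨e₀, e₁, e₂, e₃⟩ := hcramer
  by_cases hv : v₀ = 0 ∧ v₁ = 0
  · right
    simp only [hv.1, hv.2, zero_mul, add_zero] at e₀ e₁ e₂ e₃
    refine ⟨(min_le_left _ _).trans (hmult k r₀ r₁ r₂ r₃ u₀ u₁ N hN h₂ h₃ ?_ e₀ e₁ e₂ e₃),
      k, u₀, u₁, e₀, e₁, e₂, e₃⟩
    by_contra! hu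
    simp only [hu.1, hu.2, zero_mul, add_zero] at e₀ e₁ e₂ e₃
    omega
  · left
    refine (min_le_right _ _).trans ?_
    have hρ : 1 ≤ 750 * ρ * (d.X k ^ 2 * d.X (k + 1)) + K * N / d.X (k + 1) := by
      rw [not_and_or] at hv
      rcases hv with hv | hv
      · exact le_trans (by exact_mod_cast Int.one_le_abs hv) hcoord.1
      · exact le_trans (by exact_mod_cast Int.one_le_abs hv) hcoord.2
    have herr : K * N / d.X (k + 1) ≤ 1 / 2 := by
      rw [div_le_iff₀ (d.X_pos _)]
      linarith
    have hX := d.X_pos k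
    have hg : 0 ≤ 1 + gold ^ 2 := by positivity
    have hXX : d.X k ^ 2 * d.X (k + 1) ≤ d.C * G ^ (1 + gold ^ 2) * N ^ (1 + gold ^ 2) := by
      calc _ ≤ d.X k ^ 2 * (d.C * d.X k ^ gold) := by
            have := d.X_succ_le k
            gcongr
        _ = d.C * d.X k ^ (1 + gold ^ 2) := by
          rw [gold_sq, show 1 + (gold + 1) = (2 : ℕ) + gold by push_cast; ring,
            Real.rpow_add hX, Real.rpow_natCast]
          ring
        _ ≤ d.C * (G * N) ^ (1 + gold ^ 2) := by gcongr
        _ = _ := by rw [Real.mul_rpow (by linarith) (by linarith), mul_assoc]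
    have hρ₀ : 0 ≤ ρ := abs_nonneg _
    have := mul_le_mul_of_nonneg_left hXX (by positivity : 0 ≤ 1500 * ρ)
    rw [div_le_iff₀ (by positivity)]
    linarith

end MarkoffData

theorem Xnorm_eq_natCast (x : ℕ → Matrix (Fin 2) (Fin 2) ℤ) (k : ℕ) :
    Xnorm x k =
      ((max (x k 0 0).natAbs (max (x k 0 1).natAbs (x k 1 1).natAbs) : ℕ) : ℝ) := by
  simp [Xnorm, Nat.cast_natAbs]

theorem mul_le_of_rpow_gold_le {X Y Z c : ℝ} (hX : 0 < X) (hY : 0 < Y) (hc : 0 < c)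
    (hXY : c * X ^ gold ≤ Y) (hYZ : c * Y ^ gold ≤ Z) :
    X * Y ≤ (1 / c) ^ (gold - 1) / c * Z := by
  have hg : 0 ≤ gold - 1 := by linarith [one_lt_gold]
  have hXeq : X = (X ^ gold) ^ (gold - 1) := by
    rw [← Real.rpow_mul hX.le, show gold * (gold - 1) = 1 by linear_combination gold_sq,
      Real.rpow_one]
  have hXle : X ≤ (1 / c) ^ (gold - 1) * Y ^ (gold - 1) := by
    rw [← Real.mul_rpow (by positivity) hY.le]
    calc X = (X ^ gold) ^ (gold - 1) := hXeq
      _ ≤ _ := by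
        gcongr
        rw [one_div, ← div_eq_inv_mul, le_div_iff₀ hc]
        linarith
  calc X * Y ≤ (1 / c) ^ (gold - 1) * Y ^ (gold - 1) * Y := by gcongr
    _ = (1 / c) ^ (gold - 1) / c * (c * Y ^ gold) := by
      rw [Real.rpow_sub_one hY.ne' gold]
      field_simp
    _ ≤ _ := by gcongr

theorem MarkoffSeq.exists_data {ξ : ℝ} {x : ℕ → Matrix (Fin 2) (Fin 2) ℤ} (hx : MarkoffSeq ξ x) :
    ∃ d : MarkoffData ξ, ∀ k, d.a k = x (k + 1) 0 0 ∧ d.b k = x (k + 1) 0 1 ∧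
      d.c k = x (k + 1) 1 1 := by
  obtain ⟨hsymm, hdet, c₁, c₂, c₃, hc₁, hc₂, hc₃, h⟩ := hx
  have hX₀ : ∀ k, 0 ≤ Xnorm x k := fun k => (abs_nonneg _).trans (le_max_left _ _)
  have hX₁ : ∀ k, 1 ≤ Xnorm x (k + 1) := by
    intro k
    have hpos := (hX₀ (k + 1)).trans_lt (h (k + 1) (by omega)).2.2.2.2
    have ha : x (k + 1) 0 0 ≠ 0 := by
      intro ha
      simp [ha] at hpos
    exact le_max_of_le_left (by exact_mod_cast Int.one_le_abs ha)
  have hmono : StrictMono fun k => Xnorm x (k + 1) :=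
    strictMono_nat_of_lt_succ fun k => (h (k + 1) (by omega)).2.2.2.1
  have hrec : ∀ k, x (k + 3) = x (k + 2) * Mmat (k + 2) * x (k + 1) :=
    fun k => (h (k + 1) (by omega)).2.2.1.1
  have hsymm' : ∀ k, x (k + 1) 1 0 = x (k + 1) 0 1 := fun k => (hsymm (k + 1) (by omega)).symm
  have hentry : ∀ k i j, x (k + 3) i j =
      (x (k + 2) i 0 * 3 - x (k + 2) i 1 * (-1) ^ k) * x (k + 1) 0 j
        + x (k + 2) i 0 * (-1) ^ k * x (k + 1) 1 j := by
    intro k i j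
    rw [hrec]
    simp only [Matrix.mul_apply, Fin.sum_univ_two, Mmat, Matrix.of_apply, Matrix.cons_val_zero,
      Matrix.cons_val_one, Matrix.cons_val', Matrix.cons_val_fin_one]
    ring
  set W := (1 / c₁) ^ (gold - 1) / c₁ with hW
  have hW₀ : 0 ≤ W := by positivity
  set C := 1 + ξ ^ 2 + |ξ| + c₂ + c₃ + W with hC
  have hξ := abs_nonneg ξ
  have hξ₂ := sq_nonneg ξ
  refine ⟨{ s := fun k => (-1) ^ k
            a := fun k => x (k + 1) 0 0
            b := fun k => x (k + 1) 0 1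
            c := fun k => x (k + 1) 1 1
            X := fun k => Xnorm x (k + 1)
            C := C
            one_le_C := by linarith
            abs_le_C := by linarith
            sq_sign := fun k => by rw [← pow_mul, mul_comm, pow_mul]; norm_num
            sign_succ := fun k => by rw [pow_succ]; ring
            det_eq := fun k => ?_
            rec_a := fun k => ?_
            rec_b := fun k => ?_
            rec_b' := fun k => ?_
            rec_c := fun k => ?_
            abs_a_le := fun k => le_max_left _ _
            abs_b_le := fun k => (le_max_left _ _).trans (le_max_right _ _)
            abs_c_le := fun k => (le_max_right _ _).trans (le_max_right _ _)
            le_abs_a := fun k => ?_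
            one_le_X := hX₁
            strictMono_X := hmono
            tendsto_X := ?_
            approx_a := fun k => ?_
            approx_b := fun k => ?_
            X_succ_le := fun k => ?_
            X_mul_le := fun k => ?_ }, fun k => ⟨rfl, rfl, rfl⟩⟩
  · have := hdet (k + 1) (by omega)
    rw [Matrix.det_fin_two, hsymm'] at this
    linear_combination this
  · rw [hentry, hsymm']
    ring
  · rw [hentry]
    ring
  · rw [← hsymm' (k + 2), hentry, hsymm', hsymm']
    ring
  · rw [hentry, hsymm']
    ring
  · refine (h (k + 1) (by omega)).2.2.2.2.le.trans ?_
    gcongr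
    linarith
  · simp only [Xnorm_eq_natCast] at hmono ⊢
    refine tendsto_natCast_atTop_atTop.comp (StrictMono.tendsto_atTop ?_)
    exact fun i j hij => Nat.cast_lt.mp (hmono hij)
  · refine (h (k + 1) (by omega)).2.1.1.trans ?_
    have := hX₀ (k + 1)
    gcongr
    linarith
  · refine (h (k + 1) (by omega)).2.1.2.trans ?_
    have := hX₀ (k + 1)
    gcongr
    linarith
  · refine (h (k + 1) (by omega)).1.2.trans ?_
    have := hX₀ (k + 1)
    gcongr
    linarith
  · refine (mul_le_of_rpow_gold_le (zero_lt_one.trans_le (hX₁ k))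
      (zero_lt_one.trans_le (hX₁ (k + 1))) hc₁ (h (k + 1) (by omega)).1.1
      (h (k + 2) (by omega)).1.1).trans ?_
    have := hX₀ (k + 3)
    gcongr
    linarith

theorem natAbs_coeff_le_polyNorm (P : Polynomial ℤ) (i : ℕ) :
    (P.coeff i).natAbs ≤ polyNorm P := by
  by_cases hi : i ∈ P.support
  · exact Finset.le_sup (f := fun i => (P.coeff i).natAbs) hi
  · simp [Polynomial.notMem_support_iff.mp hi]

theorem abs_coeff_le_polyNorm (P : Polynomial ℤ) (i : ℕ) :
    |(P.coeff i : ℝ)| ≤ polyNorm P := by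
  rw [← Int.cast_abs, ← Nat.cast_natAbs]
  exact_mod_cast natAbs_coeff_le_polyNorm P i

theorem one_le_polyNorm {P : Polynomial ℤ} (hP : P ≠ 0) : 1 ≤ polyNorm P :=
  (Int.natAbs_pos.mpr (Polynomial.leadingCoeff_ne_zero.mpr hP)).trans_le
    (natAbs_coeff_le_polyNorm P P.natDegree)

theorem mul_rpow_neg_le_of_le {e ρ N t : ℝ} (hN : 0 < N) (h : e ≤ ρ * N ^ t) :
    e * N ^ (-t) ≤ ρ := by
  rw [Real.rpow_neg hN.le, ← div_eq_mul_inv, div_le_iff₀ (by positivity)]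
  exact h

theorem stmt14 (ξ : ℝ) (x : ℕ → Matrix (Fin 2) (Fin 2) ℤ) (hx : MarkoffSeq ξ x) :
    ∃ c : ℝ, 0 < c ∧ ∀ R : Polynomial ℤ, R ≠ 0 → R.natDegree ≤ 3 →
      |Polynomial.aeval ξ R| ≥ c * (polyNorm R : ℝ) ^ (-(gold^3)) ∧
      ((∀ k, 1 ≤ k →
          ¬ (Qpoly x k).map (Int.castRingHom ℚ) ∣ R.map (Int.castRingHom ℚ)) →
        |Polynomial.aeval ξ R| ≥ c * (polyNorm R : ℝ) ^ (-1 - gold^2)) := by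
  obtain ⟨d, hd⟩ := hx.exists_data
  obtain ⟨e, he, hcubic⟩ := d.exists_cubic_ge
  refine ⟨e, he, fun R hR hdeg => ?_⟩
  have hN : (1 : ℝ) ≤ polyNorm R := by exact_mod_cast one_le_polyNorm hR
  have hN₀ : (0 : ℝ) < polyNorm R := zero_lt_one.trans_le hN
  have hRsum : R = C (R.coeff 0) + C (R.coeff 1) * X + C (R.coeff 2) * X ^ 2
      + C (R.coeff 3) * X ^ 3 := by
    conv_lhs => rw [R.as_sum_range_C_mul_X_pow' (show R.natDegree < 4 by omega)]
    simp [Finset.sum_range_succ]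
  have hne : R.coeff 0 ≠ 0 ∨ R.coeff 1 ≠ 0 ∨ R.coeff 2 ≠ 0 ∨ R.coeff 3 ≠ 0 := by
    by_contra! h
    exact hR (by rw [hRsum]; simp [h.1, h.2.1, h.2.2.1, h.2.2.2])
  have haeval : Polynomial.aeval ξ R =
      R.coeff 0 + R.coeff 1 * ξ + R.coeff 2 * ξ ^ 2 + R.coeff 3 * ξ ^ 3 := by
    conv_lhs => rw [hRsum]
    simp
  have hmain := hcubic (R.coeff 0) (R.coeff 1) (R.coeff 2) (R.coeff 3) (polyNorm R) hN
    (abs_coeff_le_polyNorm R 1) (abs_coeff_le_polyNorm R 2) (abs_coeff_le_polyNorm R 3) hne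
  rw [← haeval] at hmain
  rcases hmain with hstrong | ⟨hweak, k, u₀, u₁, e₀, e₁, e₂, e₃⟩
  · have hρ := mul_rpow_neg_le_of_le hN₀ hstrong
    refine ⟨le_trans ?_ hρ, fun _ => by rwa [neg_add'] at hρ⟩
    gcongr
    linarith [gold_cube, gold_sq, one_lt_gold]
  · refine ⟨mul_rpow_neg_le_of_le hN₀ hweak, fun hdvd => absurd ?_ (hdvd (k + 2) (by omega))⟩
    have hQ : Qpoly x (k + 2) = C (d.q₀ k) + C (d.q₁ k) * X + C (d.q₂ k) * X ^ 2 := by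
      rw [← d.q₀_eq, ← d.q₁_eq, ← d.q₂_eq, Qpoly]
      simp only [hd, map_neg]
      ring
    have hmul : C (-4) * R = Qpoly x (k + 2) * (C u₀ + C u₁ * X) := by
      conv_lhs => rw [hRsum]
      simp only [mul_add, ← mul_assoc, ← C_mul]
      rw [e₀, e₁, e₂, e₃, hQ]
      simp only [C_mul, C_add]
      ring
    have hmap := congrArg (Polynomial.map (Int.castRingHom ℚ)) hmul
    rw [Polynomial.map_mul, Polynomial.map_mul, Polynomial.map_C] at hmap
    have hunit : IsUnit (C ((Int.castRingHom ℚ) (-4))) := by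
      rw [Polynomial.isUnit_C]
      norm_num
    exact hunit.dvd_mul_left.mp (Dvd.intro _ hmap.symm)
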